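/- Let (S,+,*) be a two-sided Ehresmann semigroupoid with set of projections U. Then S admits a category structure (maps D,R : S → S₀ making the partial operation of S the composition of a small category) if and only if the local meet-semilattice U admits a category structure (d,r : U → U₀ making its partial operation the composition of a small category). Moreover, when U has category structure d,r, setting D(s) = d(s*) and R(s) = r(s⁺) makes S a category, and conversely any category structure on S restricts to one on U. -/

import Mathlib

/-!
Everything rests on the equivalence `defined s t ↔ defined s* t⁺` (`defined_iff`), which
holds since `s = s s*` and `t = t⁺ t`. It reduces definedness in `S` to definedness in `U`, so
`D(s) = d(s*)`, `R(s) = r(s⁺)` inherit the characterisation of definedness from `d`, `r`.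
Every projection `e` satisfies `d e = r e` because `e e` is defined; together with the fact that
`(st)* t*` and `s⁺ (st)⁺` are defined this gives `D(st) = D(t)` and `R(st) = R(s)`.
Conversely, an identity `e` of a category structure on `S` is a projection, since
`e = e⁺ e = e⁺`, so the structure restricts to `U`.
-/

universe u

/-- A semigroupoid (Exel): a partially defined binary operation, associative in Exel's sense.
`defined s t` means the product `s ⋆ t` is defined; `mul` is a total function whose value is
only meaningful on defined pairs. -/
structure Semigroupoid (S : Type u) where
  defined : S → S → Prop
  mul : S → S → S
  assoc₁ : ∀ s t r, defined s t → defined t r →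
    defined (mul s t) r ∧ defined s (mul t r) ∧ mul (mul s t) r = mul s (mul t r)
  assoc₂ : ∀ s t r, defined s t → defined (mul s t) r →
    defined t r ∧ defined s (mul t r) ∧ mul (mul s t) r = mul s (mul t r)
  assoc₃ : ∀ s t r, defined t r → defined s (mul t r) →
    defined s t ∧ defined (mul s t) r ∧ mul (mul s t) r = mul s (mul t r)

/-- A left Ehresmann semigroupoid. -/
structure LeftEhresmannSgpd (S : Type u) extends Semigroupoid S where
  plus : S → S
  le1 : ∀ s, defined (plus s) s ∧ mul (plus s) s = s
  le2 : ∀ s t, defined (plus s) (plus t) →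
    defined (plus t) (plus s) ∧ mul (plus s) (plus t) = mul (plus t) (plus s)
  le3 : ∀ s t, defined (plus s) (plus t) → mul (plus s) (plus t) = plus (mul (plus s) t)
  le4 : ∀ s t, defined s t → plus (mul s t) = plus (mul s (plus t))

/-- The set of projections `S⁺ = {s⁺ : s ∈ S}`. -/
def LeftEhresmannSgpd.projections {S : Type u} (E : LeftEhresmannSgpd S) : Set S :=
  {e | ∃ s, e = E.plus s}

/-- The relation `s ≤_l t` : `s⁺t` is defined and `s⁺t = s`. -/
def LeftEhresmannSgpd.lel {S : Type u} (E : LeftEhresmannSgpd S) (s t : S) : Prop :=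
  E.defined (E.plus s) t ∧ E.mul (E.plus s) t = s

/-- A two-sided Ehresmann semigroupoid. -/
structure EhresmannSgpd (S : Type u) extends Semigroupoid S where
  plus : S → S
  star : S → S
  le1 : ∀ s, defined (plus s) s ∧ mul (plus s) s = s
  le2 : ∀ s t, defined (plus s) (plus t) →
    defined (plus t) (plus s) ∧ mul (plus s) (plus t) = mul (plus t) (plus s)
  le3 : ∀ s t, defined (plus s) (plus t) → mul (plus s) (plus t) = plus (mul (plus s) t)
  le4 : ∀ s t, defined s t → plus (mul s t) = plus (mul s (plus t))
  re1 : ∀ s, defined s (star s) ∧ mul s (star s) = s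
  re2 : ∀ s t, defined (star s) (star t) →
    defined (star t) (star s) ∧ mul (star s) (star t) = mul (star t) (star s)
  re3 : ∀ s t, defined (star s) (star t) → mul (star s) (star t) = star (mul s (star t))
  re4 : ∀ s t, defined s t → star (mul s t) = star (mul (star s) t)
  plus_star : ∀ s, star (plus s) = plus s
  star_plus : ∀ s, plus (star s) = star s

/-- The set of projections `U = S⁺ = S*`. -/
def EhresmannSgpd.projections {S : Type u} (E : EhresmannSgpd S) : Set S :=
  {e | ∃ s, e = E.plus s}

/-- `s ≤_l t` : `s⁺t` is defined and `s⁺t = s`. -/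
def EhresmannSgpd.lel {S : Type u} (E : EhresmannSgpd S) (s t : S) : Prop :=
  E.defined (E.plus s) t ∧ E.mul (E.plus s) t = s

/-- `s ≤_r t` : `ts*` is defined and `ts* = s`. -/
def EhresmannSgpd.ler {S : Type u} (E : EhresmannSgpd S) (s t : S) : Prop :=
  E.defined t (E.star s) ∧ E.mul t (E.star s) = s

/-- A two-sided restriction semigroupoid. -/
structure RestrictionSgpd (S : Type u) extends Semigroupoid S where
  plus : S → S
  star : S → S
  lr1 : ∀ s, defined (plus s) s ∧ mul (plus s) s = s
  lr2 : ∀ s t, defined (plus s) (plus t) →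
    defined (plus t) (plus s) ∧ mul (plus s) (plus t) = mul (plus t) (plus s)
  lr3 : ∀ s t, defined (plus s) (plus t) → mul (plus s) (plus t) = plus (mul (plus s) t)
  lr4 : ∀ s t, defined s t →
    defined (plus (mul s t)) s ∧ mul s (plus t) = mul (plus (mul s t)) s
  rr1 : ∀ s, defined s (star s) ∧ mul s (star s) = s
  rr2 : ∀ s t, defined (star s) (star t) →
    defined (star t) (star s) ∧ mul (star s) (star t) = mul (star t) (star s)
  rr3 : ∀ s t, defined (star s) (star t) → mul (star s) (star t) = star (mul s (star t))
  rr4 : ∀ s t, defined s t →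
    defined t (star (mul s t)) ∧ mul (star s) t = mul t (star (mul s t))
  plus_star : ∀ s, star (plus s) = plus s
  star_plus : ∀ s, plus (star s) = star s

/-- The set of projections of a restriction semigroupoid. -/
def RestrictionSgpd.projections {S : Type u} (R : RestrictionSgpd S) : Set S :=
  {e | ∃ s, e = R.plus s}

/-- The natural partial order of a restriction semigroupoid: `s ≤ t` iff `s⁺t = s`. -/
def RestrictionSgpd.natLe {S : Type u} (R : RestrictionSgpd S) (s t : S) : Prop :=
  R.defined (R.plus s) t ∧ R.mul (R.plus s) t = s

/-- A local meet-semilattice: a commutative semigroupoid in which every element is idempotent. -/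
structure LocalMeetSemilattice (S : Type u) extends Semigroupoid S where
  idem_def : ∀ e, defined e e
  idem : ∀ e, mul e e = e
  comm_def : ∀ e f, defined e f → defined f e
  comm : ∀ e f, defined e f → mul e f = mul f e

/-- A local biordered Ehresmann category. -/
structure LBEC (C : Type u) where
  obj : Set C
  dom : C → C
  cod : C → C
  comp : C → C → C
  dom_mem : ∀ x, dom x ∈ obj
  cod_mem : ∀ x, cod x ∈ obj
  dom_comp : ∀ x y, dom x = cod y → dom (comp x y) = dom y
  cod_comp : ∀ x y, dom x = cod y → cod (comp x y) = cod x
  comp_assoc : ∀ x y z, dom x = cod y → dom y = cod z →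
    comp (comp x y) z = comp x (comp y z)
  dom_obj : ∀ e, e ∈ obj → dom e = e
  cod_obj : ∀ e, e ∈ obj → cod e = e
  comp_id : ∀ x e, e ∈ obj → dom x = e → comp x e = x
  id_comp : ∀ y e, e ∈ obj → cod y = e → comp e y = y
  lel : C → C → Prop
  ler : C → C → Prop
  lel_refl : ∀ x, lel x x
  lel_antisymm : ∀ x y, lel x y → lel y x → x = y
  lel_trans : ∀ x y z, lel x y → lel y z → lel x z
  ler_refl : ∀ x, ler x x
  ler_antisymm : ∀ x y, ler x y → ler y x → x = y
  ler_trans : ∀ x y z, ler x y → ler y z → ler x z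
  lel_dom : ∀ x y, lel x y → lel (dom x) (dom y)
  lel_cod : ∀ x y, lel x y → lel (cod x) (cod y)
  ler_dom : ∀ x y, ler x y → ler (dom x) (dom y)
  ler_cod : ∀ x y, ler x y → ler (cod x) (cod y)
  lel_comp : ∀ x y x' y', lel x y → lel x' y' → dom x = cod x' → dom y = cod y' →
    lel (comp x x') (comp y y')
  ler_comp : ∀ x y x' y', ler x y → ler x' y' → dom x = cod x' → dom y = cod y' →
    ler (comp x x') (comp y y')
  cores : C → C → C
  cores_le : ∀ e x, e ∈ obj → lel e (cod x) → lel (cores e x) x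
  cod_cores : ∀ e x, e ∈ obj → lel e (cod x) → cod (cores e x) = e
  cores_unique : ∀ e x y, e ∈ obj → lel e (cod x) → lel y x → cod y = e → y = cores e x
  res : C → C → C
  res_le : ∀ x e, e ∈ obj → ler e (dom x) → ler (res x e) x
  dom_res : ∀ x e, e ∈ obj → ler e (dom x) → dom (res x e) = e
  res_unique : ∀ x e y, e ∈ obj → ler e (dom x) → ler y x → dom y = e → y = res x e
  mdef : C → C → Prop
  meet : C → C → C
  meet_mem : ∀ e f, e ∈ obj → f ∈ obj → mdef e f → meet e f ∈ obj
  mdef_self : ∀ e, e ∈ obj → mdef e e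
  meet_self : ∀ e, e ∈ obj → meet e e = e
  mdef_comm : ∀ e f, e ∈ obj → f ∈ obj → mdef e f → mdef f e
  meet_comm : ∀ e f, e ∈ obj → f ∈ obj → mdef e f → meet e f = meet f e
  meet_assoc₁ : ∀ e f g, e ∈ obj → f ∈ obj → g ∈ obj → mdef e f → mdef f g →
    mdef (meet e f) g ∧ mdef e (meet f g) ∧ meet (meet e f) g = meet e (meet f g)
  meet_assoc₂ : ∀ e f g, e ∈ obj → f ∈ obj → g ∈ obj → mdef e f → mdef (meet e f) g →
    mdef f g ∧ mdef e (meet f g) ∧ meet (meet e f) g = meet e (meet f g)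
  meet_assoc₃ : ∀ e f g, e ∈ obj → f ∈ obj → g ∈ obj → mdef f g → mdef e (meet f g) →
    mdef e f ∧ mdef (meet e f) g ∧ meet (meet e f) g = meet e (meet f g)
  ec4l : ∀ e f, e ∈ obj → f ∈ obj → (lel e f ↔ mdef e f ∧ meet e f = e)
  ec4r : ∀ e f, e ∈ obj → f ∈ obj → (ler e f ↔ mdef e f ∧ meet e f = e)
  ec5 : ∀ x z, (∃ y, lel x y ∧ ler y z) ↔ (∃ y, ler x y ∧ lel y z)
  ec6 : ∀ x y e, e ∈ obj → lel x y → mdef (dom x) e →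
    lel (res x (meet (dom x) e)) (res y (meet (dom y) e))
  ec7 : ∀ x y e, e ∈ obj → ler x y → mdef e (cod x) →
    ler (cores (meet e (cod x)) x) (cores (meet e (cod y)) y)

/-- `x ⊗ y` is defined iff `D(x) ∧ R(y)` is defined. -/
def LBEC.pdef {C : Type u} (E : LBEC C) (x y : C) : Prop :=
  E.mdef (E.dom x) (E.cod y)

/-- The pseudo-product `x ⊗ y = (x|e) ∘ (e|y)` where `e = D(x) ∧ R(y)`. -/
def LBEC.pprod {C : Type u} (E : LBEC C) (x y : C) : C :=
  E.comp (E.res x (E.meet (E.dom x) (E.cod y))) (E.cores (E.meet (E.dom x) (E.cod y)) y)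

/-- A locally inductive category. -/
structure LInductiveCat (C : Type u) where
  obj : Set C
  dom : C → C
  cod : C → C
  comp : C → C → C
  dom_mem : ∀ x, dom x ∈ obj
  cod_mem : ∀ x, cod x ∈ obj
  dom_comp : ∀ x y, dom x = cod y → dom (comp x y) = dom y
  cod_comp : ∀ x y, dom x = cod y → cod (comp x y) = cod x
  comp_assoc : ∀ x y z, dom x = cod y → dom y = cod z →
    comp (comp x y) z = comp x (comp y z)
  dom_obj : ∀ e, e ∈ obj → dom e = e
  cod_obj : ∀ e, e ∈ obj → cod e = e
  comp_id : ∀ x e, e ∈ obj → dom x = e → comp x e = x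
  id_comp : ∀ y e, e ∈ obj → cod y = e → comp e y = y
  le : C → C → Prop
  le_refl : ∀ x, le x x
  le_antisymm : ∀ x y, le x y → le y x → x = y
  le_trans : ∀ x y z, le x y → le y z → le x z
  le_dom : ∀ x y, le x y → le (dom x) (dom y)
  le_cod : ∀ x y, le x y → le (cod x) (cod y)
  le_comp : ∀ x y x' y', le x y → le x' y' → dom x = cod x' → dom y = cod y' →
    le (comp x x') (comp y y')
  res : C → C → C
  res_le : ∀ x e, e ∈ obj → le e (dom x) → le (res x e) x
  dom_res : ∀ x e, e ∈ obj → le e (dom x) → dom (res x e) = e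
  res_unique : ∀ x e y, e ∈ obj → le e (dom x) → le y x → dom y = e → y = res x e
  cores : C → C → C
  cores_le : ∀ e x, e ∈ obj → le e (cod x) → le (cores e x) x
  cod_cores : ∀ e x, e ∈ obj → le e (cod x) → cod (cores e x) = e
  cores_unique : ∀ e x y, e ∈ obj → le e (cod x) → le y x → cod y = e → y = cores e x
  mdef : C → C → Prop
  meet : C → C → C
  meet_mem : ∀ e f, e ∈ obj → f ∈ obj → mdef e f → meet e f ∈ obj
  mdef_self : ∀ e, e ∈ obj → mdef e e
  meet_self : ∀ e, e ∈ obj → meet e e = e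
  mdef_comm : ∀ e f, e ∈ obj → f ∈ obj → mdef e f → mdef f e
  meet_comm : ∀ e f, e ∈ obj → f ∈ obj → mdef e f → meet e f = meet f e
  meet_assoc₁ : ∀ e f g, e ∈ obj → f ∈ obj → g ∈ obj → mdef e f → mdef f g →
    mdef (meet e f) g ∧ mdef e (meet f g) ∧ meet (meet e f) g = meet e (meet f g)
  meet_assoc₂ : ∀ e f g, e ∈ obj → f ∈ obj → g ∈ obj → mdef e f → mdef (meet e f) g →
    mdef f g ∧ mdef e (meet f g) ∧ meet (meet e f) g = meet e (meet f g)
  meet_assoc₃ : ∀ e f g, e ∈ obj → f ∈ obj → g ∈ obj → mdef f g → mdef e (meet f g) →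
    mdef e f ∧ mdef (meet e f) g ∧ meet (meet e f) g = meet e (meet f g)
  le_meet : ∀ e f, e ∈ obj → f ∈ obj → (le e f ↔ mdef e f ∧ meet e f = e)

/-- `Cat` is the local biordered Ehresmann category `C(S)` associated with the two-sided
Ehresmann semigroupoid `E`. -/
def IsCofS {S : Type u} (E : EhresmannSgpd S) (Cat : LBEC S) : Prop :=
  Cat.obj = E.projections ∧
  Cat.dom = E.star ∧
  Cat.cod = E.plus ∧
  (∀ s t, E.star s = E.plus t → Cat.comp s t = E.mul s t) ∧
  Cat.lel = E.lel ∧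
  Cat.ler = E.ler ∧
  (∀ e f, e ∈ E.projections → f ∈ E.projections →
    (Cat.mdef e f ↔ E.defined e f) ∧ (E.defined e f → Cat.meet e f = E.mul e f))

/-- `E` is the two-sided Ehresmann semigroupoid `S(C)` associated with the local biordered
Ehresmann category `Cat`. -/
def IsSofC {C : Type u} (Cat : LBEC C) (E : EhresmannSgpd C) : Prop :=
  (E.defined = Cat.pdef) ∧
  (∀ x y, E.defined x y → E.mul x y = Cat.pprod x y) ∧
  E.plus = Cat.cod ∧
  E.star = Cat.dom

/-- `L` is the locally inductive category `C(S)` associated with the two-sided restriction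
semigroupoid `R`. -/
def IsCofSRes {S : Type u} (R : RestrictionSgpd S) (L : LInductiveCat S) : Prop :=
  L.obj = R.projections ∧
  L.dom = R.star ∧
  L.cod = R.plus ∧
  (∀ s t, R.star s = R.plus t → L.comp s t = R.mul s t) ∧
  L.le = R.natLe ∧
  (∀ e f, e ∈ R.projections → f ∈ R.projections →
    (L.mdef e f ↔ R.defined e f) ∧ (R.defined e f → L.meet e f = R.mul e f))

/-- `t` is a pseudo-inverse of `s` in the semigroupoid `Sg`. -/
def Semigroupoid.PInv {S : Type u} (Sg : Semigroupoid S) (s t : S) : Prop :=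
  Sg.defined s t ∧ Sg.defined t s ∧ Sg.mul (Sg.mul s t) s = s ∧ Sg.mul (Sg.mul t s) t = t

/-- The restriction semigroupoid `R` is an inverse semigroupoid with `s⁺ = ss⁻¹`, `s* = s⁻¹s`. -/
def RestrictionSgpd.IsInverse {S : Type u} (R : RestrictionSgpd S) : Prop :=
  ∃ inv : S → S,
    (∀ s, R.toSemigroupoid.PInv s (inv s)) ∧
    (∀ s t, R.toSemigroupoid.PInv s t → t = inv s) ∧
    (∀ s, R.plus s = R.mul s (inv s) ∧ R.star s = R.mul (inv s) s)

/-- `y` is an inverse of `x` in the category `L`. -/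
def LInductiveCat.IsInv {C : Type u} (L : LInductiveCat C) (x y : C) : Prop :=
  L.dom y = L.cod x ∧ L.cod y = L.dom x ∧ L.comp x y = L.cod x ∧ L.comp y x = L.dom x

/-- The category `L` is a groupoid: every element has a unique inverse. -/
def LInductiveCat.IsGroupoid {C : Type u} (L : LInductiveCat C) : Prop :=
  ∀ x, ∃! y, L.IsInv x y

/-- Inversion in `L` is order-preserving (condition (ig1) of locally inductive groupoids). -/
def LInductiveCat.InvOrdPres {C : Type u} (L : LInductiveCat C) : Prop :=
  ∀ x y x' y', L.IsInv x x' → L.IsInv y y' → L.le x y → L.le x' y'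

/-- `(S0, D, R)` is a category structure on the semigroupoid `Sg`. -/
def Semigroupoid.CatStructOn {S : Type u} (Sg : Semigroupoid S) (S0 : Set S)
    (D R : S → S) : Prop :=
  (∀ s, D s ∈ S0) ∧ (∀ s, R s ∈ S0) ∧
  (∀ s t, Sg.defined s t ↔ D s = R t) ∧
  (∀ s t, Sg.defined s t → D (Sg.mul s t) = D t ∧ R (Sg.mul s t) = R s) ∧
  (∀ e, e ∈ S0 → D e = e ∧ R e = e) ∧
  (∀ s, Sg.mul s (D s) = s) ∧
  (∀ t, Sg.mul (R t) t = t)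

/-- `(U0, d, r)` is a category structure on the sub-semigroupoid of `Sg` with underlying
set `U`. -/
def Semigroupoid.CatStructOnSubset {S : Type u} (Sg : Semigroupoid S) (U : Set S)
    (U0 : Set S) (d r : S → S) : Prop :=
  U0 ⊆ U ∧
  (∀ e, e ∈ U → d e ∈ U0 ∧ r e ∈ U0) ∧
  (∀ e f, e ∈ U → f ∈ U → (Sg.defined e f ↔ d e = r f)) ∧
  (∀ e f, e ∈ U → f ∈ U → Sg.defined e f →
    d (Sg.mul e f) = d f ∧ r (Sg.mul e f) = r e) ∧
  (∀ e, e ∈ U0 → d e = e ∧ r e = e) ∧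
  (∀ e, e ∈ U → Sg.mul e (d e) = e ∧ Sg.mul (r e) e = e)

/-- A (2,1,1)-morphism between two-sided Ehresmann semigroupoids. -/
def Is211 {S : Type u} {T : Type u} (E : EhresmannSgpd S) (F : EhresmannSgpd T)
    (φ : S → T) : Prop :=
  (∀ s t, E.defined s t →
    F.defined (φ s) (φ t) ∧ φ (E.mul s t) = F.mul (φ s) (φ t)) ∧
  (∀ s, φ (E.plus s) = F.plus (φ s)) ∧
  (∀ s, φ (E.star s) = F.star (φ s))

/-- An inductive functor between local biordered Ehresmann categories. -/
def IndFunctor {C : Type u} {D : Type u} (A : LBEC C) (B : LBEC D) (φ : C → D) : Prop :=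
  (∀ x, φ (A.dom x) = B.dom (φ x)) ∧
  (∀ x, φ (A.cod x) = B.cod (φ x)) ∧
  (∀ x y, A.dom x = A.cod y → φ (A.comp x y) = B.comp (φ x) (φ y)) ∧
  (∀ x y, A.lel x y → B.lel (φ x) (φ y)) ∧
  (∀ x y, A.ler x y → B.ler (φ x) (φ y)) ∧
  (∀ e f, e ∈ A.obj → f ∈ A.obj → A.mdef e f →
    B.mdef (φ e) (φ f) ∧ φ (A.meet e f) = B.meet (φ e) (φ f))

/-- A ∨-premorphism between two-sided restriction semigroupoids. -/
def VPre {S : Type u} {T : Type u} (R1 : RestrictionSgpd S) (R2 : RestrictionSgpd T)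
    (φ : S → T) : Prop :=
  (∀ s t, R1.defined s t →
    R2.defined (φ s) (φ t) ∧ R2.natLe (φ (R1.mul s t)) (R2.mul (φ s) (φ t))) ∧
  (∀ s, φ (R1.plus s) = R2.plus (φ s)) ∧
  (∀ s, φ (R1.star s) = R2.star (φ s))

/-- An ordered functor between locally inductive categories. -/
def OrdFunctor {C : Type u} {D : Type u} (A : LInductiveCat C) (B : LInductiveCat D)
    (φ : C → D) : Prop :=
  (∀ x, φ (A.dom x) = B.dom (φ x)) ∧
  (∀ x, φ (A.cod x) = B.cod (φ x)) ∧
  (∀ x y, A.dom x = A.cod y → φ (A.comp x y) = B.comp (φ x) (φ y)) ∧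
  (∀ x y, A.le x y → B.le (φ x) (φ y))

/-- Composition of binary relations on `X`. -/
def rcomp {X : Type u} (R S : Set (X × X)) : Set (X × X) :=
  {p | ∃ z, (p.1, z) ∈ R ∧ (z, p.2) ∈ S}

/-- `R⁺ = {(x,x) : (x,y) ∈ R for some y}`. -/
def rplus {X : Type u} (R : Set (X × X)) : Set (X × X) :=
  {p | p.1 = p.2 ∧ ∃ y, (p.1, y) ∈ R}

/-- `R* = {(y,y) : (x,y) ∈ R for some x}`. -/
def rstar {X : Type u} (R : Set (X × X)) : Set (X × X) :=
  {p | p.1 = p.2 ∧ ∃ x, (x, p.2) ∈ R}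


namespace EhresmannSgpd

variable {S : Type u} (E : EhresmannSgpd S)

theorem plus_plus (s : S) : E.plus (E.plus s) = E.plus s := by
  simpa only [E.plus_star] using E.star_plus (E.plus s)

theorem star_star (s : S) : E.star (E.star s) = E.star s := by
  simpa only [E.star_plus] using E.plus_star (E.star s)

theorem plus_mem (s : S) : E.plus s ∈ E.projections := ⟨s, rfl⟩

theorem star_mem (s : S) : E.star s ∈ E.projections := ⟨E.star s, (E.star_plus s).symm⟩

variable {E} in
theorem plus_of_mem {e : S} (he : e ∈ E.projections) : E.plus e = e := by
  obtain ⟨s, rfl⟩ := he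
  exact E.plus_plus s

variable {E} in
theorem star_of_mem {e : S} (he : e ∈ E.projections) : E.star e = e := by
  obtain ⟨s, rfl⟩ := he
  exact E.plus_star s

variable {E} in
theorem defined_self_of_mem {e : S} (he : e ∈ E.projections) : E.defined e e := by
  simpa only [plus_of_mem he] using (E.le1 e).1

/-- Definedness of a product depends only on the projections `s*` and `t⁺`. -/
theorem defined_iff (s t : S) : E.defined s t ↔ E.defined (E.star s) (E.plus t) := by
  constructor
  · intro h
    have h1 := (E.assoc₂ s (E.star s) t (E.re1 s).1 (by rwa [(E.re1 s).2])).1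
    exact (E.assoc₃ (E.star s) (E.plus t) t (E.le1 t).1 (by rwa [(E.le1 t).2])).1
  · intro h
    have h1 := (E.assoc₁ _ _ _ h (E.le1 t).1).2.1
    rw [(E.le1 t).2] at h1
    simpa only [(E.re1 s).2] using (E.assoc₁ _ _ _ (E.re1 s).1 h1).1

theorem defined_star_mul {s t : S} (h : E.defined s t) :
    E.defined (E.star (E.mul s t)) (E.star t) := by
  simpa only [E.star_plus] using
    (E.defined_iff _ _).1 (E.assoc₁ _ _ _ h (E.re1 t).1).1

theorem defined_plus_mul {s t : S} (h : E.defined s t) :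
    E.defined (E.plus s) (E.plus (E.mul s t)) := by
  simpa only [E.plus_star] using
    (E.defined_iff _ _).1 (E.assoc₁ _ _ _ (E.le1 s).1 h).2.1

theorem catStructOn_of_subset {U0 : Set S} {d r : S → S}
    (H : E.toSemigroupoid.CatStructOnSubset E.projections U0 d r) :
    E.toSemigroupoid.CatStructOn U0 (fun s => d (E.star s)) (fun s => r (E.plus s)) := by
  obtain ⟨hU, hm, hdef, -, hid, hone⟩ := H
  have hdr : ∀ e ∈ E.projections, d e = r e := fun e he =>
    (hdef e e he he).1 (defined_self_of_mem he)
  refine ⟨fun s => (hm _ (E.star_mem s)).1, fun s => (hm _ (E.plus_mem s)).2,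
    fun s t => ?_, fun s t h => ⟨?_, ?_⟩, fun e he => ⟨?_, ?_⟩, fun s => ?_, fun t => ?_⟩
  · exact (E.defined_iff s t).trans (hdef _ _ (E.star_mem s) (E.plus_mem t))
  · exact ((hdef _ _ (E.star_mem _) (E.star_mem t)).1 (E.defined_star_mul h)).trans
      (hdr _ (E.star_mem t)).symm
  · exact ((hdef _ _ (E.plus_mem s) (E.plus_mem _)).1 (E.defined_plus_mul h)).symm.trans
      (hdr _ (E.plus_mem s))
  · simpa only [star_of_mem (hU he)] using (hid e he).1
  · simpa only [plus_of_mem (hU he)] using (hid e he).2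
  · have he := E.star_mem s
    have h0 := (hm _ he).1
    have h1 : E.defined (E.star s) (d (E.star s)) :=
      (hdef _ _ he (hU h0)).2 (hid _ h0).2.symm
    have h2 := (E.assoc₁ _ _ _ (E.re1 s).1 h1).2.2
    rwa [(hone _ he).1, (E.re1 s).2] at h2
  · have he := E.plus_mem t
    have h0 := (hm _ he).2
    have h1 : E.defined (r (E.plus t)) (E.plus t) :=
      (hdef _ _ (hU h0) he).2 (hid _ h0).1
    have h2 := (E.assoc₁ _ _ _ h1 (E.le1 t).1).2.2
    rw [(hone _ he).2, (E.le1 t).2] at h2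
    exact h2.symm

theorem catStructOnSubset_of_catStructOn {S0 : Set S} {D R : S → S}
    (H : E.toSemigroupoid.CatStructOn S0 D R) :
    E.toSemigroupoid.CatStructOnSubset E.projections S0 D R := by
  obtain ⟨hD, hR, hdef, hmul, hid, hr1, hl1⟩ := H
  refine ⟨fun e he => ⟨e, ?_⟩, fun e _ => ⟨hD e, hR e⟩, fun e f _ _ => hdef e f,
    fun e f _ _ h => hmul e f h, hid, fun e _ => ⟨hr1 e, hl1 e⟩⟩
  -- Since `e⁺ e` is defined, `D(e⁺) = R(e) = e`, so `e = e⁺ e = e⁺ D(e⁺) = e⁺`.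
  have h1 : D (E.plus e) = e := ((hdef _ _).1 (E.le1 e).1).trans (hid e he).2
  have h2 := hr1 (E.plus e)
  rw [h1, (E.le1 e).2] at h2
  exact h2

end EhresmannSgpd

/-- A two-sided Ehresmann semigroupoid `S` admits a category structure iff
the local meet-semilattice of projections `U` admits a category structure. Moreover, a
category structure `(U₀, d, r)` on `U` induces the category structure on `S` given by
`D(s) = d(s*)`, `R(s) = r(s⁺)`, and conversely any category structure on `S` restricts to
one on `U`. -/
theorem stmt17 {S : Type u} (E : EhresmannSgpd S) :
    ((∃ (S0 : Set S) (D R : S → S), E.toSemigroupoid.CatStructOn S0 D R) ↔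
      (∃ (U0 : Set S) (d r : S → S),
        E.toSemigroupoid.CatStructOnSubset E.projections U0 d r)) ∧
    (∀ (U0 : Set S) (d r : S → S),
      E.toSemigroupoid.CatStructOnSubset E.projections U0 d r →
      E.toSemigroupoid.CatStructOn U0 (fun s => d (E.star s)) (fun s => r (E.plus s))) ∧
    (∀ (S0 : Set S) (D R : S → S), E.toSemigroupoid.CatStructOn S0 D R →
      E.toSemigroupoid.CatStructOnSubset E.projections S0 D R) := by
  refine ⟨⟨?_, ?_⟩, fun _ _ _ => E.catStructOn_of_subset,
    fun _ _ _ => E.catStructOnSubset_of_catStructOn⟩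
  · rintro ⟨S0, D, R, H⟩
    exact ⟨S0, D, R, E.catStructOnSubset_of_catStructOn H⟩
  · rintro ⟨U0, d, r, H⟩
    exact ⟨U0, _, _, E.catStructOn_of_subset H⟩
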